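/- Let α ∈ (0, 1) be a real number. Suppose that for every real ε > 0 there exists a constant C(ε) > 0 such that every connected graph G' on m vertices has a +⌈C(ε)·m^{α+ε}⌉ additive emulator with at most C(ε)·m edges. Then for every real ε > 0 there exists a constant C'(ε) > 0 such that every connected graph G on n vertices has a +⌈C'(ε)·n^{1/(6−4α)+ε}⌉ additive emulator with at most C'(ε)·n edges. -/

import Mathlib

open SimpleGraph

/-- The weighted distance in an emulator `H` with edge weights `w`:
the minimum total weight of a walk from `s` to `t` (`⊤` if none exists). -/
noncomputable def emulatorDist {V : Type*} (H : SimpleGraph V) (w : Sym2 V → ℕ)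
    (s t : V) : ℕ∞ :=
  ⨅ p : H.Walk s t, ((p.edges.map w).sum : ℕ∞)

/-- `H` (with positive integer edge weights `w`) is a `+k` additive emulator of `G`:
for all vertices `s, t`, `dist_G(s,t) ≤ dist_H(s,t) ≤ dist_G(s,t) + k`. -/
def IsAdditiveEmulator {V : Type*} (G H : SimpleGraph V) (w : Sym2 V → ℕ)
    (k : ℕ) : Prop :=
  (∀ e ∈ H.edgeSet, 0 < w e) ∧
  ∀ s t : V, (G.dist s t : ℕ∞) ≤ emulatorDist H w s t ∧
    emulatorDist H w s t ≤ (G.dist s t : ℕ∞) + (k : ℕ∞)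

/-!
Fix a scale `r`. Every vertex has a radius between `r` and `r * n ^ η` at which its ball grows by at
most a constant factor when the radius is multiplied by `8`, so a Vitali covering by such balls has
total volume `O(n)`, and radii can be chosen so that the bounding spheres are an `O(1 / r)` fraction
of the balls. Join each center to its cluster; cross a cluster with at most `r` boundary vertices by
direct pairs, and each of the other, heavy, clusters by the emulator given by the hypothesis.

Following a shortest path from cluster to cluster costs error only in heavy clusters. Either the
total stays below `r`, or the heavy clusters met before the budget `r` is spent have total error at
least `r`, so a greedy hitting set meets them. Heavy clusters have at least `r ^ 2` vertices, hence
the errors of all heavy clusters sum to `O(n * r ^ (2 * β - 2))` and the hitting set has size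
`O(n * r ^ (2 * β - 3) * log n)`. It can be turned into a clique with `O(n)` edges as soon as this
is `O(√n)`, which happens at `r = n ^ (1 / (6 - 4 * β))` up to the slack `ε`.
-/

section Distance

variable {V W : Type*} {G : SimpleGraph V}

/-- The vertex `x` lies on some shortest path of `G` from `u` to `v`. -/
def OnGeodesic (G : SimpleGraph V) (u x v : V) : Prop :=
  G.dist u x + G.dist x v = G.dist u v

namespace OnGeodesic

variable {u v x y : V}

lemma left (G : SimpleGraph V) (u v : V) : OnGeodesic G u u v := by simp [OnGeodesic]

lemma symm (h : OnGeodesic G u x v) : OnGeodesic G v x u := by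
  unfold OnGeodesic at *
  rw [G.dist_comm (u := v), G.dist_comm (u := x) (v := u), G.dist_comm (u := v)]
  lia

lemma trans_right (hG : G.Connected) (hx : OnGeodesic G u x v) (hy : OnGeodesic G x y v) :
    OnGeodesic G u y v := by
  have := hG.dist_triangle (u := u) (v := x) (w := y)
  have := hG.dist_triangle (u := u) (v := y) (w := v)
  unfold OnGeodesic at *
  lia

lemma trans_left (hG : G.Connected) (hx : OnGeodesic G u x v) (hy : OnGeodesic G x y v) :
    OnGeodesic G u x y := by
  have := hG.dist_triangle (u := u) (v := x) (w := y)
  have := hG.dist_triangle (u := u) (v := y) (w := v)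
  unfold OnGeodesic at *
  lia

lemma of_adj_of_length_eq (hG : G.Connected) (h : G.Adj u x) (p : G.Walk x v)
    (hp : p.length + 1 = G.dist u v) : OnGeodesic G u x v := by
  have := SimpleGraph.dist_le p
  have := SimpleGraph.dist_eq_one_iff_adj.2 h
  have := hG.dist_triangle (u := u) (v := x) (w := v)
  unfold OnGeodesic
  lia

lemma of_mem_support (hG : G.Connected) {p : G.Walk u v} (hp : p.length = G.dist u v)
    (hx : x ∈ p.support) : OnGeodesic G u x v := by
  classical
  have := SimpleGraph.dist_le (p.takeUntil x hx)
  have := SimpleGraph.dist_le (p.dropUntil x hx)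
  have hlen := congrArg Walk.length (p.take_spec hx)
  rw [Walk.length_append] at hlen
  have := hG.dist_triangle (u := u) (v := x) (w := v)
  unfold OnGeodesic
  lia

end OnGeodesic

lemma exists_last_onGeodesic_dist_eq (hG : G.Connected) {c v t : V} {ρ : ℕ}
    (hv : G.dist c v ≤ ρ) (ht : ρ < G.dist c t) :
    ∃ x, OnGeodesic G v x t ∧ G.dist c x = ρ ∧ ∀ y, OnGeodesic G x y t → ρ ≤ G.dist c y := by
  obtain ⟨x, ⟨hvx, hxρ⟩, hmin⟩ := WellFounded.has_min
    (measure fun x => G.dist x t).wf {x | OnGeodesic G v x t ∧ G.dist c x ≤ ρ}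
    ⟨v, OnGeodesic.left G v t, hv⟩
  replace hmin : ∀ y, OnGeodesic G x y t → G.dist c y ≤ ρ → G.dist x t ≤ G.dist y t :=
    fun y hy hyρ => not_lt.1 (hmin y ⟨hvx.trans_right hG hy, hyρ⟩)
  have hx : G.dist c x = ρ := by
    by_contra hne
    obtain ⟨p, hp⟩ := hG.exists_walk_length_eq_dist x t
    cases p with
    | nil => lia
    | @cons _ y _ hxy p =>
      rw [Walk.length_cons] at hp
      have := hG.dist_triangle (u := c) (v := x) (w := y)
      have := SimpleGraph.dist_eq_one_iff_adj.2 hxy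
      have := hmin y (.of_adj_of_length_eq hG hxy p hp) (by lia)
      have := SimpleGraph.dist_le p
      lia
  refine ⟨x, hvx, hx, fun y hy => ?_⟩
  by_contra! hlt
  have hyt := hmin y hy hlt.le
  unfold OnGeodesic at hy
  have hxy : x = y := hG.dist_eq_zero_iff.1 (by lia)
  lia

lemma dist_map_le_of_reachable {G' : SimpleGraph W} (f : G' →g G) {x y : W}
    (h : G'.Reachable x y) : G.dist (f x) (f y) ≤ G'.dist x y := by
  obtain ⟨p, hp⟩ := h.exists_walk_length_eq_dist
  rw [← hp, ← Walk.length_map f p]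
  exact SimpleGraph.dist_le _

lemma exists_walk_induce_length_eq_dist (hG : G.Connected) {B : Set V} {x y : V} (hx : x ∈ B)
    (hy : y ∈ B) (h : ∀ u, OnGeodesic G x u y → u ∈ B) :
    ∃ p : (G.induce B).Walk ⟨x, hx⟩ ⟨y, hy⟩, p.length = G.dist x y := by
  obtain ⟨p, hp⟩ := hG.exists_walk_length_eq_dist x y
  have hpB : ∀ u ∈ p.support, u ∈ B := fun u hu => h u (.of_mem_support hG hp hu)
  refine ⟨p.induce B hpB, ?_⟩
  have hlen := congrArg Walk.length (Walk.map_induce p hpB)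
  rw [Walk.length_map] at hlen
  exact hlen.trans hp

variable [Fintype V]

open Classical in
/-- The vertices at distance at most `k` from `c`, as a finset. -/
noncomputable def closedBallFinset (G : SimpleGraph V) (c : V) (k : ℕ) : Finset V :=
  {x | G.dist c x ≤ k}

open Classical in
/-- The vertices at distance exactly `k` from `c`, as a finset. -/
noncomputable def sphereFinset (G : SimpleGraph V) (c : V) (k : ℕ) : Finset V :=
  {x | G.dist c x = k}

@[simp]
lemma mem_closedBallFinset {c x : V} {k : ℕ} : x ∈ closedBallFinset G c k ↔ G.dist c x ≤ k := by
  simp [closedBallFinset]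

@[simp]
lemma mem_sphereFinset {c x : V} {k : ℕ} : x ∈ sphereFinset G c k ↔ G.dist c x = k := by
  simp [sphereFinset]

lemma closedBallFinset_mono (G : SimpleGraph V) (c : V) {k l : ℕ} (h : k ≤ l) :
    closedBallFinset G c k ⊆ closedBallFinset G c l := fun x => by
  simpa using fun hx : G.dist c x ≤ k => hx.trans h

lemma one_le_card_closedBallFinset (G : SimpleGraph V) (c : V) (k : ℕ) :
    1 ≤ (closedBallFinset G c k).card :=
  Finset.card_pos.2 ⟨c, by simp⟩

lemma connected_induce_closedBallFinset (hG : G.Connected) (c : V) (k : ℕ) :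
    (G.induce (closedBallFinset G c k : Set V)).Connected := by
  rw [SimpleGraph.connected_iff_exists_forall_reachable]
  refine ⟨⟨c, by simp⟩, fun ⟨y, hy⟩ => ?_⟩
  obtain ⟨p, -⟩ := exists_walk_induce_length_eq_dist hG (x := c) (by simp) hy fun u hu => by
    simp only [Finset.mem_coe, mem_closedBallFinset] at hy ⊢
    unfold OnGeodesic at hu
    lia
  exact ⟨p⟩

lemma dist_induce_closedBallFinset_two_mul_le (hG : G.Connected) {c : V} {ρ : ℕ}
    (x y : (closedBallFinset G c (2 * ρ) : Set V)) (hx : G.dist c x ≤ ρ) (hy : G.dist c y ≤ ρ) :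
    (G.induce (closedBallFinset G c (2 * ρ) : Set V)).dist x y ≤ G.dist x.1 y.1 := by
  have hgeod : ∀ u, OnGeodesic G x u y → u ∈ (closedBallFinset G c (2 * ρ) : Set V) := by
    intro u hu
    have hcu := hG.dist_triangle (u := c) (v := x.1) (w := u)
    have hcu' := hG.dist_triangle (u := c) (v := y.1) (w := u)
    have hxy := hG.dist_triangle (u := x.1) (v := c) (w := y.1)
    rw [G.dist_comm (u := x.1) (v := c)] at hxy
    rw [G.dist_comm (u := y.1) (v := u)] at hcu'
    simp only [Finset.mem_coe, mem_closedBallFinset]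
    unfold OnGeodesic at hu
    lia
  obtain ⟨p, hp⟩ := exists_walk_induce_length_eq_dist hG x.2 y.2 hgeod
  exact hp ▸ SimpleGraph.dist_le p

lemma exists_sphereFinset_card_mul_le (G : SimpleGraph V) (c : V) {a b : ℕ} (hab : a < b) :
    ∃ ρ ∈ Finset.Ioc a b, (sphereFinset G c ρ).card * (b - a) ≤ (closedBallFinset G c b).card := by
  classical
  have hdisj : (Finset.Ioc a b : Set ℕ).PairwiseDisjoint (sphereFinset G c) := by
    intro ρ _ ρ' _ hne
    refine Finset.disjoint_left.2 fun x hx hx' => hne ?_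
    rw [mem_sphereFinset] at hx hx'
    lia
  have hsub : (Finset.Ioc a b).biUnion (sphereFinset G c) ⊆ closedBallFinset G c b := by
    intro x hx
    obtain ⟨ρ, hρ, hx⟩ := Finset.mem_biUnion.1 hx
    rw [Finset.mem_Ioc] at hρ
    rw [mem_sphereFinset] at hx
    rw [mem_closedBallFinset]
    lia
  refine Finset.exists_le_of_sum_le (Finset.nonempty_Ioc.2 hab) ?_
  rw [← Finset.sum_mul, ← Finset.card_biUnion hdisj, Finset.sum_const, Nat.card_Ioc, smul_eq_mul,
    mul_comm]
  exact Nat.mul_le_mul_left _ (Finset.card_le_card hsub)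

end Distance

section Stretch

variable {V W : Type*} {G : SimpleGraph V}

/-- The edge weights under which every pair is as long as the distance in `G` it spans. -/
noncomputable def distWeight (G : SimpleGraph V) : Sym2 V → ℕ :=
  Sym2.lift ⟨G.dist, fun _ _ => SimpleGraph.dist_comm⟩

@[simp]
lemma distWeight_mk (G : SimpleGraph V) (u v : V) : distWeight G s(u, v) = G.dist u v := rfl

lemma dist_le_sum_distWeight (hG : G.Connected) {H : SimpleGraph V} {u v : V} (p : H.Walk u v) :
    G.dist u v ≤ (p.edges.map (distWeight G)).sum := by
  induction p with
  | nil => simp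
  | cons _ p ih =>
    simp only [Walk.edges_cons, List.map_cons, List.sum_cons, distWeight_mk]
    exact hG.dist_triangle.trans (Nat.add_le_add_left ih _)

/-- Some walk from `u` to `v` along pairs in `E`, each weighted by the distance in `G` it spans,
exceeds `G.dist u v` by at most `k`. Degenerate pairs in `E` are allowed and have no effect. -/
def StretchLE (G : SimpleGraph V) (E : Set (Sym2 V)) (k : ℕ) (u v : V) : Prop :=
  ∃ p : (fromEdgeSet E).Walk u v,
    (p.edges.map (distWeight G)).sum ≤ G.dist u v + k

namespace StretchLE

variable {E E' : Set (Sym2 V)} {k l m : ℕ} {u v x : V}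

lemma refl (G : SimpleGraph V) (E : Set (Sym2 V)) (k : ℕ) (u : V) : StretchLE G E k u u :=
  ⟨.nil, by simp⟩

lemma of_mem (h : s(u, v) ∈ E) : StretchLE G E 0 u v := by
  by_cases huv : u = v
  · exact huv ▸ refl G E 0 u
  · exact ⟨.cons ((fromEdgeSet_adj E).2 ⟨h, huv⟩) .nil, by simp⟩

lemma mono (h : StretchLE G E k u v) (hE : E ⊆ E') (hkl : k ≤ l) : StretchLE G E' l u v := by
  obtain ⟨p, hp⟩ := h
  refine ⟨p.mapLe (fromEdgeSet_mono hE), ?_⟩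
  rw [Walk.edges_mapLe_eq_edges]
  lia

lemma symm (h : StretchLE G E k u v) : StretchLE G E k v u := by
  obtain ⟨p, hp⟩ := h
  refine ⟨p.reverse, ?_⟩
  rwa [Walk.edges_reverse, List.map_reverse, List.sum_reverse, G.dist_comm]

lemma trans (huv : StretchLE G E k u v) (hvx : StretchLE G E l v x)
    (h : G.dist u v + k + (G.dist v x + l) ≤ G.dist u x + m) : StretchLE G E m u x := by
  obtain ⟨p, hp⟩ := huv
  obtain ⟨q, hq⟩ := hvx
  refine ⟨p.append q, ?_⟩
  rw [Walk.edges_append, List.map_append, List.sum_append]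
  lia

lemma trans_of_onGeodesic (huv : StretchLE G E k u v) (hvx : StretchLE G E l v x)
    (h : OnGeodesic G u v x) : StretchLE G E (k + l) u x :=
  huv.trans hvx (by unfold OnGeodesic at h; lia)

lemma of_star {c : V} {ρ : ℕ} (hstar : ∀ x, G.dist c x ≤ ρ → s(c, x) ∈ E)
    (hu : G.dist c u ≤ ρ) (hv : G.dist c v ≤ ρ) : StretchLE G E (2 * ρ) u v := by
  refine (of_mem (hstar u hu)).symm.trans (of_mem (hstar v hv)) ?_
  rw [G.dist_comm (u := u)]
  lia

end StretchLE

lemma isAdditiveEmulator_of_stretchLE (hG : G.Connected) {E : Set (Sym2 V)} {k : ℕ}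
    (h : ∀ s t, StretchLE G E k s t) :
    IsAdditiveEmulator G (fromEdgeSet E) (distWeight G) k := by
  refine ⟨fun e => ?_, fun s t => ⟨le_iInf fun p => ?_, ?_⟩⟩
  · induction e with
    | _ u v => exact fun huv => hG.pos_dist_of_ne (SimpleGraph.mem_edgeSet _ |>.1 huv).ne
  · exact_mod_cast dist_le_sum_distWeight hG p
  · obtain ⟨p, hp⟩ := h s t
    exact (iInf_le _ p).trans (by exact_mod_cast hp)

namespace IsAdditiveEmulator

variable {G' H : SimpleGraph W} {w : Sym2 W → ℕ} {k l : ℕ} {x y : W}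

lemma mono (h : IsAdditiveEmulator G' H w k) (hkl : k ≤ l) : IsAdditiveEmulator G' H w l :=
  ⟨h.1, fun s t => ⟨(h.2 s t).1, (h.2 s t).2.trans (by gcongr)⟩⟩

lemma dist_le_weight (h : IsAdditiveEmulator G' H w k) (hxy : H.Adj x y) :
    G'.dist x y ≤ w s(x, y) := by
  have hle : emulatorDist H w x y ≤ w s(x, y) :=
    (iInf_le _ (Walk.cons hxy .nil)).trans (by simp)
  exact_mod_cast (h.2 x y).1.trans hle

lemma exists_walk_sum_le (h : IsAdditiveEmulator G' H w k) (x y : W) :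
    ∃ p : H.Walk x y, (p.edges.map w).sum ≤ G'.dist x y + k := by
  have hlt : emulatorDist H w x y < ((G'.dist x y + k + 1 : ℕ) : ℕ∞) :=
    (h.2 x y).2.trans_lt (by exact_mod_cast Nat.lt_succ_self _)
  obtain ⟨p, hp⟩ := iInf_lt_iff.1 hlt
  exact ⟨p, Nat.lt_succ_iff.1 (by exact_mod_cast hp)⟩

lemma exists_walk_image (h : IsAdditiveEmulator G' H w k) (hG' : G'.Connected) (f : G' →g G)
    (p : H.Walk x y) :
    ∃ q : (fromEdgeSet (Sym2.map f '' H.edgeSet)).Walk (f x) (f y),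
      (q.edges.map (distWeight G)).sum ≤ (p.edges.map w).sum := by
  induction p with
  | nil => exact ⟨.nil, by simp⟩
  | @cons x z y hxz p ih =>
    obtain ⟨q, hq⟩ := ih
    obtain ⟨e, he⟩ : StretchLE G (Sym2.map f '' H.edgeSet) 0 (f x) (f z) :=
      .of_mem ⟨s(x, z), hxz, by simp⟩
    refine ⟨e.append q, ?_⟩
    have := dist_map_le_of_reachable f (hG' x z)
    have := h.dist_le_weight hxz
    simp only [Walk.edges_append, Walk.edges_cons, List.map_append,
      List.sum_append, List.map_cons, List.sum_cons]
    lia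

lemma stretchLE_image (h : IsAdditiveEmulator G' H w k) (hG' : G'.Connected) (f : G' →g G)
    (hxy : G'.dist x y ≤ G.dist (f x) (f y)) :
    StretchLE G (Sym2.map f '' H.edgeSet) k (f x) (f y) := by
  obtain ⟨p, hp⟩ := h.exists_walk_sum_le x y
  obtain ⟨q, hq⟩ := h.exists_walk_image hG' f p
  exact ⟨q, by lia⟩

end IsAdditiveEmulator

/-- Every connected graph on `m` vertices has a `+⌈C * m ^ β⌉` additive emulator with at most
`C * m` edges. -/
def EmulatorBound (C β : ℝ) : Prop :=
  ∀ m : ℕ, ∀ G : SimpleGraph (Fin m), G.Connected →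
    ∃ (H : SimpleGraph (Fin m)) (w : Sym2 (Fin m) → ℕ),
      IsAdditiveEmulator G H w ⌈C * (m : ℝ) ^ β⌉₊ ∧ (H.edgeSet.ncard : ℝ) ≤ C * m

namespace EmulatorBound

variable {C β γ : ℝ}

lemma mono (h : EmulatorBound C β) (hC : 0 ≤ C) (hβγ : β ≤ γ) : EmulatorBound C γ := by
  intro m G hG
  obtain ⟨H, w, hH, hcard⟩ := h m G hG
  have hm : 1 ≤ (m : ℝ) := by exact_mod_cast Fin.pos_iff_nonempty.2 hG.nonempty
  exact ⟨H, w, hH.mono (by gcongr), hcard⟩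

lemma exists_stretchLE_image (h : EmulatorBound C β) [Fintype W] {G' : SimpleGraph W}
    (hG' : G'.Connected) (f : G' →g G) :
    ∃ E : Finset (Sym2 V), (E.card : ℝ) ≤ C * Fintype.card W ∧
      ∀ x y, G'.dist x y ≤ G.dist (f x) (f y) →
        StretchLE G E ⌈C * (Fintype.card W : ℝ) ^ β⌉₊ (f x) (f y) := by
  let i : G'.comap (Fintype.equivFin W).symm ≃g G' := .comap (Fintype.equivFin W).symm G'
  have hi : (G'.comap (Fintype.equivFin W).symm).Connected := i.connected_iff.2 hG'
  obtain ⟨H, w, hH, hcard⟩ := h _ _ hi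
  have hfin := (Set.toFinite H.edgeSet).image (Sym2.map (f.comp i.toHom))
  refine ⟨hfin.toFinset, hcard.trans' ?_, fun x y hxy => ?_⟩
  · rw [← Set.ncard_eq_toFinset_card _ hfin]
    exact_mod_cast Set.ncard_image_le (Set.toFinite _)
  · have hdist := dist_map_le_of_reachable i.symm.toHom (hG' x y)
    simpa using hH.stretchLE_image (x := i.symm x) (y := i.symm y) hi (f.comp i.toHom)
      (by simpa using hdist.trans hxy)

lemma exists_stretchLE_closedBallFinset (h : EmulatorBound C β) [Fintype V] (hG : G.Connected)
    (c : V) (ρ : ℕ) :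
    ∃ E : Finset (Sym2 V), (E.card : ℝ) ≤ C * (closedBallFinset G c (2 * ρ)).card ∧
      ∀ x y, G.dist c x ≤ ρ → G.dist c y ≤ ρ →
        StretchLE G E ⌈C * ((closedBallFinset G c (2 * ρ)).card : ℝ) ^ β⌉₊ x y := by
  obtain ⟨E, hcard, hE⟩ := h.exists_stretchLE_image
    (connected_induce_closedBallFinset hG c (2 * ρ))
    (SimpleGraph.Embedding.induce (closedBallFinset G c (2 * ρ) : Set V)).toHom
  simp only [Finset.coe_sort_coe, Fintype.card_coe] at hcard hE
  exact ⟨E, hcard, fun x y hx hy => hE ⟨x, by simp; lia⟩ ⟨y, by simp; lia⟩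
    (dist_induce_closedBallFinset_two_mul_le hG _ _ hx hy)⟩

end EmulatorBound

end Stretch

section HittingSet

variable {ι α : Type*} {T : Finset ι} {X : ι → Finset α} {L : Finset α}
  {a : α → ℝ} {b : ℝ}

lemma sum_sum_eq_sum_mul_card_filter [DecidableEq α] (hX : ∀ i ∈ T, X i ⊆ L) :
    ∑ i ∈ T, ∑ v ∈ X i, a v = ∑ v ∈ L, a v * ({i ∈ T | v ∈ X i} : Finset ι).card := by
  rw [Finset.sum_comm' (t' := L) (s' := fun v => {i ∈ T | v ∈ X i})]
  · simp only [Finset.sum_const, nsmul_eq_mul, mul_comm]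
  · simp only [Finset.mem_filter]
    exact fun i v => ⟨fun h => ⟨h, hX i h.1 h.2⟩, fun h => h.1⟩

lemma exists_mem_card_mul_le_sum_mul_card_filter [DecidableEq α] (hL : L.Nonempty)
    (ha : ∀ v ∈ L, 0 ≤ a v) (hX : ∀ i ∈ T, X i ⊆ L) (hb : ∀ i ∈ T, b ≤ ∑ v ∈ X i, a v) :
    ∃ c ∈ L, T.card * b ≤ (∑ v ∈ L, a v) * ({i ∈ T | c ∈ X i} : Finset ι).card := by
  obtain ⟨c, hc, hmax⟩ := L.exists_max_image (fun v => ({i ∈ T | v ∈ X i} : Finset ι).card) hL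
  refine ⟨c, hc, ?_⟩
  calc T.card * b ≤ ∑ i ∈ T, ∑ v ∈ X i, a v := by
        simpa using Finset.card_nsmul_le_sum T _ b hb
    _ = ∑ v ∈ L, a v * ({i ∈ T | v ∈ X i} : Finset ι).card := sum_sum_eq_sum_mul_card_filter hX
    _ ≤ ∑ v ∈ L, a v * ({i ∈ T | c ∈ X i} : Finset ι).card :=
        Finset.sum_le_sum fun v hv =>
          mul_le_mul_of_nonneg_left (by exact_mod_cast hmax v hv) (ha v hv)
    _ = _ := (Finset.sum_mul ..).symm

-- Greedily adding the best element of `L` shrinks the unhit part by the factor `1 - b / ∑ a`.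
lemma exists_subset_card_filter_disjoint_le [DecidableEq α]
    (ha : ∀ v ∈ L, 0 ≤ a v) (hsum : 0 < ∑ v ∈ L, a v) (hX : ∀ i ∈ T, X i ⊆ L)
    (hb : ∀ i ∈ T, b ≤ ∑ v ∈ X i, a v) (k : ℕ) :
    ∃ Z ⊆ L, Z.card ≤ k ∧ (({i ∈ T | Disjoint Z (X i)} : Finset ι).card : ℝ) ≤
      T.card * Real.exp (-(b / ∑ v ∈ L, a v)) ^ k := by
  have hL : L.Nonempty := Finset.nonempty_of_sum_ne_zero hsum.ne'
  induction k with
  | zero => exact ⟨∅, by simp⟩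
  | succ k ih =>
    obtain ⟨Z, hZL, hZk, hZ⟩ := ih
    set F : Finset ι := {i ∈ T | Disjoint Z (X i)} with hF
    have hFT : F ⊆ T := Finset.filter_subset _ _
    obtain ⟨c, hcL, hc⟩ := exists_mem_card_mul_le_sum_mul_card_filter hL ha
      (fun i hi => hX i (hFT hi)) (fun i hi => hb i (hFT hi))
    refine ⟨insert c Z, Finset.insert_subset hcL hZL,
      (Finset.card_insert_le _ _).trans (by lia), ?_⟩
    have hunhit : ({i ∈ T | Disjoint (insert c Z) (X i)} : Finset ι) = {i ∈ F | c ∉ X i} := by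
      ext i
      simp only [hF, Finset.mem_filter, Finset.disjoint_insert_left]
      tauto
    have hsplit : (({i ∈ F | c ∈ X i} : Finset ι).card : ℝ) + ({i ∈ F | c ∉ X i} : Finset ι).card
        = F.card := by
      exact_mod_cast Finset.card_filter_add_card_filter_not (s := F) (fun i => c ∈ X i)
    have hhit : F.card * (b / ∑ v ∈ L, a v) ≤ ({i ∈ F | c ∈ X i} : Finset ι).card := by
      rw [← mul_div_assoc, div_le_iff₀' hsum]
      exact hc
    rw [hunhit]
    calc (({i ∈ F | c ∉ X i} : Finset ι).card : ℝ) ≤ F.card * (1 - b / ∑ v ∈ L, a v) := by linarith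
      _ ≤ F.card * Real.exp (-(b / ∑ v ∈ L, a v)) := by
          gcongr
          exact Real.one_sub_le_exp_neg _
      _ ≤ T.card * Real.exp (-(b / ∑ v ∈ L, a v)) ^ k * Real.exp (-(b / ∑ v ∈ L, a v)) := by gcongr
      _ = _ := by ring

lemma natCast_mul_exp_neg_pow_lt_one {N k : ℕ} {x : ℝ} (hN : 0 < N) (h : Real.log N < x * k) :
    (N : ℝ) * Real.exp (-x) ^ k < 1 := by
  have hN' : (0 : ℝ) < N := by exact_mod_cast hN
  rw [← Real.exp_nat_mul, ← Real.log_neg_iff (by positivity),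
    Real.log_mul hN'.ne' (Real.exp_ne_zero _), Real.log_exp]
  linarith

lemma exists_subset_card_le_forall_not_disjoint (ha : ∀ v ∈ L, 0 ≤ a v) (hb0 : 0 < b)
    (hX : ∀ i ∈ T, X i ⊆ L) (hb : ∀ i ∈ T, b ≤ ∑ v ∈ X i, a v) :
    ∃ Z ⊆ L, (Z.card : ℝ) ≤ (∑ v ∈ L, a v) / b * Real.log T.card + 1 ∧
      ∀ i ∈ T, ¬ Disjoint Z (X i) := by
  classical
  rcases T.eq_empty_or_nonempty with rfl | ⟨i, hi⟩
  · exact ⟨∅, by simp⟩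
  have hsum : 0 < ∑ v ∈ L, a v := hb0.trans_le <| (hb i hi).trans <|
    Finset.sum_le_sum_of_subset_of_nonneg (hX i hi) fun v hv _ => ha v hv
  obtain ⟨Z, hZL, hZk, hZ⟩ := exists_subset_card_filter_disjoint_le ha hsum hX hb
    (⌊(∑ v ∈ L, a v) / b * Real.log T.card⌋₊ + 1)
  refine ⟨Z, hZL, ?_, ?_⟩
  · calc (Z.card : ℝ) ≤ (⌊(∑ v ∈ L, a v) / b * Real.log T.card⌋₊ + 1 : ℕ) := by exact_mod_cast hZk
      _ ≤ _ := by
          push_cast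
          gcongr
          exact Nat.floor_le (mul_nonneg (by positivity) (Real.log_natCast_nonneg _))
  · have hlog : Real.log T.card <
        b / (∑ v ∈ L, a v) * (⌊(∑ v ∈ L, a v) / b * Real.log T.card⌋₊ + 1 : ℕ) := by
      rw [← div_lt_iff₀' (by positivity), div_div_eq_mul_div, mul_comm, ← div_mul_eq_mul_div]
      exact_mod_cast Nat.lt_floor_add_one _
    have hempty := hZ.trans_lt (natCast_mul_exp_neg_pow_lt_one (Finset.card_pos.2 ⟨i, hi⟩) hlog)
    rw [Nat.cast_lt_one, Finset.card_eq_zero, Finset.filter_eq_empty_iff] at hempty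
    exact fun i hi => hempty hi

end HittingSet

section Clustering

variable {V : Type*} {G : SimpleGraph V}

/-- A covering of the vertices by open balls around finitely many centers, together with a choice,
for each vertex `v`, of the center `home v` of a ball containing it. The values of `radius` off
`centers` are irrelevant. -/
structure Clustering (G : SimpleGraph V) where
  centers : Finset V
  radius : V → ℕ
  home : V → V
  home_mem : ∀ v, home v ∈ centers
  dist_home_lt : ∀ v, G.dist (home v) v < radius (home v)

lemma exists_pow_le_and_apply_succ_le_mul {f : ℕ → ℝ} {D N : ℝ} (hD : 1 < D) (h0 : 1 ≤ f 0)
    (hN : ∀ j, f j ≤ N) : ∃ j, D ^ j ≤ N ∧ f (j + 1) ≤ D * f j := by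
  classical
  have hgrow : ∀ j, (∀ i < j, D * f i < f (i + 1)) → D ^ j ≤ f j := by
    intro j
    induction j with
    | zero => simpa using h0
    | succ j ih =>
      intro h
      calc D ^ (j + 1) = D * D ^ j := pow_succ' D j
        _ ≤ D * f j := by
            gcongr
            exact ih fun i hi => h i (by lia)
        _ ≤ f (j + 1) := (h j (by lia)).le
  have hex : ∃ j, f (j + 1) ≤ D * f j := by
    by_contra! hfast
    obtain ⟨j, hj⟩ := pow_unbounded_of_one_lt N hD
    exact (hj.trans_le (hgrow j fun i _ => hfast i)).not_ge (hN j)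
  exact ⟨Nat.find hex, (hgrow _ fun i hi => not_le.1 (Nat.find_min hex hi)).trans (hN _),
    Nat.find_spec hex⟩

variable [Fintype V]

-- Growth by more than `8 ^ (1 / η)` at each of the radii `r * 8 ^ i`, `i < j`, forces
-- `8 ^ (j / η) ≤ n`, that is `8 ^ j ≤ n ^ η`.
lemma exists_card_closedBallFinset_eight_mul_le (G : SimpleGraph V) (v : V) {η : ℝ} (hη : 0 < η)
    (r : ℕ) :
    ∃ k : ℕ, r ≤ k ∧ (k : ℝ) ≤ r * (Fintype.card V : ℝ) ^ η ∧
      ((closedBallFinset G v (8 * k)).card : ℝ) ≤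
        (8 : ℝ) ^ (1 / η) * (closedBallFinset G v k).card := by
  obtain ⟨j, hj, hgrowth⟩ := exists_pow_le_and_apply_succ_le_mul
    (f := fun j => ((closedBallFinset G v (r * 8 ^ j)).card : ℝ)) (D := (8 : ℝ) ^ (1 / η))
    (N := Fintype.card V) (Real.one_lt_rpow (by norm_num) (by positivity))
    (by exact_mod_cast one_le_card_closedBallFinset G v _)
    (fun j => by exact_mod_cast Finset.card_le_univ _)
  have h8 : (8 : ℝ) ^ j = (((8 : ℝ) ^ (1 / η)) ^ j) ^ η := by
    rw [← Real.rpow_mul_natCast (by norm_num), ← Real.rpow_mul (by norm_num),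
      show 1 / η * j * η = j by field_simp, Real.rpow_natCast]
  refine ⟨r * 8 ^ j, Nat.le_mul_of_pos_right _ (by positivity), ?_, ?_⟩
  · push_cast
    rw [h8]
    gcongr
  · rwa [show 8 * (r * 8 ^ j) = r * 8 ^ (j + 1) by ring]

lemma exists_pairwiseDisjoint_closedBallFinset_cover (hG : G.Connected) (k : V → ℕ) :
    ∃ I : Finset V, (I : Set V).PairwiseDisjoint (fun c => closedBallFinset G c (k c)) ∧
      ∀ v, ∃ c ∈ I, G.dist c v ≤ 3 * k c := by
  classical
  obtain ⟨I, -, hdisj, hcover⟩ := Vitali.exists_disjoint_subfamily_covering_enlargement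
    (fun v => (closedBallFinset G v (k v) : Set V)) Set.univ (fun v => (k v : ℝ)) 2 (by norm_num)
    (fun _ _ => by positivity) (∑ v, (k v : ℝ))
    (fun v _ => Finset.single_le_sum (f := fun v => (k v : ℝ)) (fun _ _ => by positivity)
      (Finset.mem_univ v))
    (fun v _ => ⟨v, by simp⟩)
  refine ⟨I.toFinset, fun c hc c' hc' hne => ?_, fun v => ?_⟩
  · exact Finset.disjoint_coe.1 (hdisj (by simpa using hc) (by simpa using hc') hne)
  · obtain ⟨c, hc, ⟨x, hvx, hcx⟩, hk⟩ := hcover v trivial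
    simp only [Finset.mem_coe, mem_closedBallFinset] at hvx hcx
    have hk' : k v ≤ 2 * k c := by exact_mod_cast hk
    have := hG.dist_triangle (u := c) (v := x) (w := v)
    rw [G.dist_comm (u := x)] at this
    exact ⟨c, by simpa using hc, by lia⟩

lemma sum_card_closedBallFinset_le {I : Finset V} {k : V → ℕ}
    (h : (I : Set V).PairwiseDisjoint (fun c => closedBallFinset G c (k c))) :
    ∑ c ∈ I, (closedBallFinset G c (k c)).card ≤ Fintype.card V := by
  classical
  rw [← Finset.card_biUnion h]
  exact Finset.card_le_univ _

namespace Clustering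

/-- The total size of the balls of twice the cluster radii. -/
noncomputable def volume (P : Clustering G) : ℕ :=
  ∑ c ∈ P.centers, (closedBallFinset G c (2 * P.radius c)).card

/-- The spheres of all clusters have size at most a `1 / r` fraction of the doubled ball. -/
def ThinSpheres (P : Clustering G) (r : ℕ) : Prop :=
  ∀ c ∈ P.centers,
    (sphereFinset G c (P.radius c)).card * r ≤ (closedBallFinset G c (2 * P.radius c)).card

end Clustering

lemma exists_clustering (hG : G.Connected) {η : ℝ} (hη : 0 < η) {r : ℕ} (hr : 0 < r) :
    ∃ P : Clustering G,
      (∀ c ∈ P.centers, (P.radius c : ℝ) ≤ 4 * (r * (Fintype.card V : ℝ) ^ η)) ∧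
      (P.volume : ℝ) ≤ (8 : ℝ) ^ (1 / η) * Fintype.card V ∧ P.ThinSpheres r := by
  choose k hrk hk hgrowth using fun v => exists_card_closedBallFinset_eight_mul_le G v hη r
  obtain ⟨I, hdisj, hcover⟩ := exists_pairwiseDisjoint_closedBallFinset_cover hG k
  choose ρ hρ hthin using fun c =>
    exists_sphereFinset_card_mul_le G c (a := 3 * k c) (b := 4 * k c) (by have := hrk c; lia)
  simp only [Finset.mem_Ioc] at hρ
  choose home hhome hdist using hcover
  refine ⟨⟨I, ρ, home, hhome, fun v => (hdist v).trans_lt (hρ (home v)).1⟩, fun c _ => ?_, ?_,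
    fun c _ => ?_⟩
  · calc (ρ c : ℝ) ≤ 4 * k c := by exact_mod_cast (hρ c).2
      _ ≤ _ := by
          gcongr
          exact hk c
  · calc ((∑ c ∈ I, (closedBallFinset G c (2 * ρ c)).card : ℕ) : ℝ)
        ≤ ∑ c ∈ I, ((closedBallFinset G c (8 * k c)).card : ℝ) := by
          push_cast
          gcongr with c
          exact closedBallFinset_mono G c (by have := (hρ c).2; lia)
      _ ≤ ∑ c ∈ I, (8 : ℝ) ^ (1 / η) * (closedBallFinset G c (k c)).card :=
          Finset.sum_le_sum fun c _ => hgrowth c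
      _ ≤ (8 : ℝ) ^ (1 / η) * Fintype.card V := by
          rw [← Finset.mul_sum]
          gcongr
          exact_mod_cast sum_card_closedBallFinset_le hdisj
  · calc (sphereFinset G c (ρ c)).card * r ≤ (sphereFinset G c (ρ c)).card * (4 * k c - 3 * k c) :=
          Nat.mul_le_mul_left _ (by have := hrk c; lia)
      _ ≤ (closedBallFinset G c (4 * k c)).card := hthin c
      _ ≤ (closedBallFinset G c (2 * ρ c)).card :=
          Finset.card_le_card (closedBallFinset_mono G c (by have := (hρ c).1; lia))

end Clustering

section Routing

variable {V : Type*} {G : SimpleGraph V}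

namespace Clustering

/-- Some vertex of the cluster `c` on a shortest path from `s` to `t` is reached from `s` with
additive error at most `b`. -/
def ReachesCluster (P : Clustering G) (E : Set (Sym2 V)) (b : ℕ) (s t c : V) : Prop :=
  ∃ u, P.home u = c ∧ OnGeodesic G s u t ∧ StretchLE G E b s u

variable {P : Clustering G} {E E' : Set (Sym2 V)} {L Z : Finset V} {k : V → ℕ} {b d R : ℕ}
  {s t v v' c : V}

lemma ReachesCluster.home_self (P : Clustering G) (E : Set (Sym2 V)) (b : ℕ) (v t : V) :
    P.ReachesCluster E b v t (P.home v) :=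
  ⟨v, rfl, .left G v t, .refl G E b v⟩

lemma ReachesCluster.of_onGeodesic (h : P.ReachesCluster E b v' t c) (hG : G.Connected)
    (hv' : OnGeodesic G v v' t) (hstep : StretchLE G E d v v') :
    P.ReachesCluster E (d + b) v t c := by
  obtain ⟨u, hu, huv', hstretch⟩ := h
  exact ⟨u, hu, hv'.trans_right hG huv',
    hstep.trans_of_onGeodesic hstretch (hv'.trans_left hG huv')⟩

open Classical in
lemma add_sum_filter_reachesCluster_le (hG : G.Connected) (hvL : P.home v ∈ L)
    (hv' : OnGeodesic G v v' t) (hstep : StretchLE G E (k (P.home v)) v v')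
    (hnot : ¬ P.ReachesCluster E b v' t (P.home v)) :
    k (P.home v) + ∑ c ∈ L with P.ReachesCluster E b v' t c, k c ≤
      ∑ c ∈ L with P.ReachesCluster E (k (P.home v) + b) v t c, k c := by
  rw [← Finset.sum_insert (by simp [hnot])]
  refine Finset.sum_le_sum_of_subset (Finset.insert_subset ?_ fun c hc => ?_)
  · exact Finset.mem_filter.2 ⟨hvL, .home_self ..⟩
  · rw [Finset.mem_filter] at hc ⊢
    exact ⟨hc.1, hc.2.of_onGeodesic hG hv' hstep⟩

variable [Fintype V]

open Classical in
/-- The vertices lying on the sphere bounding some cluster. -/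
noncomputable def boundary (P : Clustering G) : Finset V :=
  P.centers.biUnion fun c => sphereFinset G c (P.radius c)

@[simp]
lemma mem_boundary : v ∈ P.boundary ↔ ∃ c ∈ P.centers, G.dist c v = P.radius c := by
  simp [boundary]

lemma exists_exit (P : Clustering G) (hG : G.Connected)
    (ht : P.radius (P.home v) < G.dist (P.home v) t) :
    ∃ x ∈ P.boundary, OnGeodesic G v x t ∧ G.dist (P.home v) x = P.radius (P.home v) ∧
      G.dist x t < G.dist v t ∧ ∀ u, OnGeodesic G x u t → P.home u ≠ P.home v := by
  have hv := P.dist_home_lt v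
  obtain ⟨x, hgeod, hx, hout⟩ := exists_last_onGeodesic_dist_eq hG hv.le ht
  have hvx : 0 < G.dist v x := hG.pos_dist_of_ne (by rintro rfl; lia)
  refine ⟨x, ?_, hgeod, hx, by unfold OnGeodesic at hgeod; lia, fun u hu hhome => ?_⟩
  · exact mem_boundary.2 ⟨P.home v, P.home_mem v, hx⟩
  · have := P.dist_home_lt u
    have := hout u hu
    rw [hhome] at *
    lia

/-- The pairs `E` allow routing through the clusters of `P`: centers are joined to their clusters,
a boundary vertex crosses its home cluster in one step if that is not in `L`, and a cluster
`c ∈ L` is crossed with additive error `k c`. -/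
structure Supports (P : Clustering G) (E : Set (Sym2 V)) (L : Finset V) (k : V → ℕ) : Prop where
  star : ∀ c ∈ P.centers, ∀ x, G.dist c x ≤ P.radius c → s(c, x) ∈ E
  cross : ∀ v ∈ P.boundary, P.home v ∉ L → ∀ x, G.dist (P.home v) x = P.radius (P.home v) →
    s(v, x) ∈ E
  inner : ∀ c ∈ L, ∀ x y, G.dist c x ≤ P.radius c → G.dist c y ≤ P.radius c →
    StretchLE G E (k c) x y

namespace Supports

lemma stretchLE_home (hE : P.Supports E L k) (hR : ∀ c ∈ P.centers, P.radius c ≤ R)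
    (ht : G.dist (P.home v) t ≤ P.radius (P.home v)) : StretchLE G E (2 * R) v t :=
  (StretchLE.of_star (hE.star _ (P.home_mem v)) (P.dist_home_lt v).le ht).mono le_rfl
    (Nat.mul_le_mul_left 2 (hR _ (P.home_mem v)))

-- Walk along a shortest path from cluster to cluster. Crossing a cluster of `L` spends its `k`
-- from the budget `b`, and no cluster is met twice, so an exhausted budget means that the clusters
-- met so far have total `k` at least `b`.
open Classical in
lemma stretchLE_or_le_sum_of_mem_boundary (hE : P.Supports E L k) (hG : G.Connected)
    (hR : ∀ c ∈ P.centers, P.radius c ≤ R) (hv : v ∈ P.boundary) (b : ℕ) :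
    StretchLE G E (b + 2 * R) v t ∨ b ≤ ∑ c ∈ L with P.ReachesCluster E b v t c, k c := by
  induction hd : G.dist v t using Nat.strong_induction_on generalizing v b with
  | _ d ih =>
    rcases le_or_gt (G.dist (P.home v) t) (P.radius (P.home v)) with ht | ht
    · exact .inl ((hE.stretchLE_home hR ht).mono le_rfl (by lia))
    obtain ⟨x, hxP, hgeod, hx, hlt, hleft⟩ := P.exists_exit hG ht
    by_cases hvL : P.home v ∈ L
    · have hstep := hE.inner _ hvL v x (P.dist_home_lt v).le hx.le
      rcases le_total b (k (P.home v)) with hb | hb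
      · exact .inr (hb.trans (Finset.single_le_sum (fun _ _ => Nat.zero_le _)
          (Finset.mem_filter.2 ⟨hvL, .home_self ..⟩)))
      obtain ⟨b, rfl⟩ := Nat.exists_eq_add_of_le hb
      rcases ih _ (hd ▸ hlt) hxP b rfl with h | h
      · exact .inl ((hstep.trans_of_onGeodesic h hgeod).mono le_rfl (by lia))
      · refine .inr ((Nat.add_le_add_left h _).trans ?_)
        exact add_sum_filter_reachesCluster_le hG hvL hgeod hstep
          fun ⟨u, hu, hux, _⟩ => hleft u hux hu
    · have hstep : StretchLE G E 0 v x := .of_mem (hE.cross v hv hvL x hx)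
      rcases ih _ (hd ▸ hlt) hxP b rfl with h | h
      · exact .inl ((hstep.trans_of_onGeodesic h hgeod).mono le_rfl (by lia))
      · refine .inr (h.trans (Finset.sum_le_sum_of_subset fun c hc => ?_))
        rw [Finset.mem_filter] at hc ⊢
        exact ⟨hc.1, Nat.zero_add b ▸ hc.2.of_onGeodesic hG hgeod hstep⟩

open Classical in
lemma stretchLE_or_le_sum (hE : P.Supports E L k) (hG : G.Connected)
    (hR : ∀ c ∈ P.centers, P.radius c ≤ R) (b : ℕ) (s t : V) :
    StretchLE G E (b + 4 * R) s t ∨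
      b ≤ ∑ c ∈ L with P.ReachesCluster E (b + 2 * R) s t c, k c := by
  rcases le_or_gt (G.dist (P.home s) t) (P.radius (P.home s)) with ht | ht
  · exact .inl ((hE.stretchLE_home hR ht).mono le_rfl (by lia))
  obtain ⟨x, hxP, hgeod, hx, -⟩ := P.exists_exit hG ht
  have hstep := hE.stretchLE_home hR hx.le
  rcases hE.stretchLE_or_le_sum_of_mem_boundary hG hR hxP b (t := t) with h | h
  · exact .inl ((hstep.trans_of_onGeodesic h hgeod).mono le_rfl (by lia))
  · refine .inr (h.trans (Finset.sum_le_sum_of_subset fun c hc => ?_))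
    rw [Finset.mem_filter] at hc ⊢
    exact ⟨hc.1, Nat.add_comm (2 * R) b ▸ hc.2.of_onGeodesic hG hgeod hstep⟩

lemma exists_hubs (hE : P.Supports E L k) (hG : G.Connected)
    (hR : ∀ c ∈ P.centers, P.radius c ≤ R) (hb : 0 < b) :
    ∃ Z : Finset V,
      (Z.card : ℝ) ≤ (∑ c ∈ L, (k c : ℝ)) / b * (2 * Real.log (Fintype.card V)) + 1 ∧
      ∀ s t, StretchLE G E (b + 4 * R) s t ∨ ∃ h ∈ Z, P.ReachesCluster E (b + 2 * R) s t h := by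
  classical
  let T : Finset (V × V) := {q | ¬ StretchLE G E (b + 4 * R) q.1 q.2}
  obtain ⟨Z, -, hcard, hhit⟩ := exists_subset_card_le_forall_not_disjoint (T := T)
    (X := fun q => {c ∈ L | P.ReachesCluster E (b + 2 * R) q.1 q.2 c}) (L := L)
    (a := fun c => (k c : ℝ)) (b := b) (fun _ _ => by positivity) (by exact_mod_cast hb)
    (fun _ _ => Finset.filter_subset _ _)
    (fun q hq => by
      exact_mod_cast (hE.stretchLE_or_le_sum hG hR b q.1 q.2).resolve_left
        (Finset.mem_filter.1 hq).2)
  have hlog : Real.log T.card ≤ 2 * Real.log (Fintype.card V) := by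
    have hT : T.card ≤ Fintype.card V ^ 2 :=
      (Finset.card_le_univ _).trans_eq (by rw [Fintype.card_prod, sq])
    rcases T.card.eq_zero_or_pos with h0 | h0
    · simpa [h0] using Real.log_natCast_nonneg (Fintype.card V)
    · simpa using Real.log_le_log (by exact_mod_cast h0) (Nat.cast_le (α := ℝ).2 hT)
  refine ⟨Z, hcard.trans (by gcongr), fun s t => or_iff_not_imp_left.2 fun hst => ?_⟩
  obtain ⟨h, hhZ, hh⟩ := Finset.not_disjoint_iff.1 (hhit (s, t) (by simpa [T] using hst))
  exact ⟨h, hhZ, (Finset.mem_filter.1 hh).2⟩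

lemma stretchLE_of_home_mem_clique (hE : P.Supports E L k) (hG : G.Connected)
    (hR : ∀ c ∈ P.centers, P.radius c ≤ R) (hEE' : E ⊆ E')
    (hclique : ∀ x ∈ Z, ∀ y ∈ Z, s(x, y) ∈ E') (hs : P.home s ∈ Z) (ht : P.home t ∈ Z) :
    StretchLE G E' (4 * R) s t := by
  have hspoke (v : V) : StretchLE G E' 0 (P.home v) v :=
    .of_mem (hEE' (hE.star _ (P.home_mem v) v (P.dist_home_lt v).le))
  have hlen (v : V) : G.dist (P.home v) v ≤ R := (P.dist_home_lt v).le.trans (hR _ (P.home_mem v))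
  have hdetour : StretchLE G E' (G.dist (P.home s) s + G.dist s (P.home s)) s (P.home t) := by
    refine (hspoke s).symm.trans (.of_mem (hclique _ hs _ ht)) ?_
    have := hG.dist_triangle (u := P.home s) (v := s) (w := P.home t)
    lia
  refine hdetour.trans (hspoke t) ?_
  have := hG.dist_triangle (u := s) (v := t) (w := P.home t)
  have := G.dist_comm (u := t) (v := P.home t)
  have := G.dist_comm (u := s) (v := P.home s)
  have := hlen s
  have := hlen t
  lia

lemma stretchLE_of_clique (hE : P.Supports E L k) (hG : G.Connected)
    (hR : ∀ c ∈ P.centers, P.radius c ≤ R) (hEE' : E ⊆ E')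
    (hclique : ∀ x ∈ Z, ∀ y ∈ Z, s(x, y) ∈ E')
    (hhub : ∀ s t, StretchLE G E (b + 4 * R) s t ∨ ∃ h ∈ Z, P.ReachesCluster E (b + 2 * R) s t h)
    (s t : V) : StretchLE G E' (2 * b + 8 * R) s t := by
  rcases hhub s t with h | ⟨_, hu, u, rfl, hgeod, hsu⟩
  · exact h.mono hEE' (by lia)
  replace hsu := hsu.mono hEE' le_rfl
  rcases hhub t u with h | ⟨_, hu', u', rfl, hgeod', htu'⟩
  · have hut := h.symm.mono hEE' le_rfl
    exact (hsu.trans_of_onGeodesic hut hgeod).mono le_rfl (by lia)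
  · have huu' := hE.stretchLE_of_home_mem_clique hG hR hEE' hclique hu hu'
    have hut := huu'.trans_of_onGeodesic (htu'.symm.mono hEE' le_rfl) hgeod'.symm
    exact (hsu.trans_of_onGeodesic hut hgeod).mono le_rfl (by lia)

end Supports

end Clustering

end Routing

section Construction

variable {V : Type*} [Fintype V] {G : SimpleGraph V}

lemma natCast_ceil_mul_rpow_le {C β x y : ℝ} (hC : 0 ≤ C) (hβ0 : 0 ≤ β) (hβ1 : β ≤ 1) (hx : 0 < x)
    (hxy : x ≤ y) (hy : 1 ≤ y) :
    (⌈C * y ^ β⌉₊ : ℝ) ≤ (C + 1) * y * x ^ (β - 1) :=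
  calc (⌈C * y ^ β⌉₊ : ℝ) ≤ C * y ^ β + 1 := (Nat.ceil_lt_add_one (by positivity)).le
    _ ≤ C * y ^ β + y ^ β := by
        gcongr
        exact Real.one_le_rpow hy hβ0
    _ = (C + 1) * y * y ^ (β - 1) := by
        rw [Real.rpow_sub_one (by positivity)]
        field_simp
    _ ≤ (C + 1) * y * x ^ (β - 1) := by
        refine mul_le_mul_of_nonneg_left ?_ (by positivity)
        exact Real.rpow_le_rpow_of_nonpos hx hxy (sub_nonpos.2 hβ1)

namespace Clustering

variable {P : Clustering G} {r : ℕ} {k : V → ℕ} {E : V → Finset (Sym2 V)}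

/-- The centers whose bounding sphere has more than `r` vertices, too many for crossing the cluster
directly with few pairs. -/
noncomputable def heavy (P : Clustering G) (r : ℕ) : Finset V :=
  {c ∈ P.centers | r < (sphereFinset G c (P.radius c)).card}

open Classical in
/-- The pairs joining each center to the vertices of its cluster. -/
noncomputable def starEdges (P : Clustering G) : Finset (Sym2 V) :=
  P.centers.biUnion fun c => (closedBallFinset G c (P.radius c)).image fun x => s(c, x)

open Classical in
/-- The pairs joining each boundary vertex, unless its home is heavy, to the sphere bounding its
home cluster. -/
noncomputable def crossEdges (P : Clustering G) (r : ℕ) : Finset (Sym2 V) :=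
  {v ∈ P.boundary | P.home v ∉ P.heavy r}.biUnion fun v =>
    (sphereFinset G (P.home v) (P.radius (P.home v))).image fun x => s(v, x)

open Classical in
lemma supports_union (h : ∀ c ∈ P.heavy r, ∀ x y, G.dist c x ≤ P.radius c →
      G.dist c y ≤ P.radius c → StretchLE G (E c) (k c) x y) :
    P.Supports ↑(P.starEdges ∪ P.crossEdges r ∪ (P.heavy r).biUnion E) (P.heavy r) k where
  star c hc x hx := by
    simp only [Finset.coe_union]
    refine .inl (.inl (Finset.mem_biUnion.2 ⟨c, hc, Finset.mem_image_of_mem _ ?_⟩))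
    simpa using hx
  cross v hv hvL x hx := by
    simp only [Finset.coe_union]
    refine .inl (.inr (Finset.mem_biUnion.2 ⟨v, Finset.mem_filter.2 ⟨hv, hvL⟩,
      Finset.mem_image_of_mem _ ?_⟩))
    simpa using hx
  inner c hc x y hx hy := by
    refine (h c hc x y hx hy).mono (Finset.coe_subset.2 ?_) le_rfl
    exact (Finset.subset_biUnion_of_mem E hc).trans Finset.subset_union_right

lemma card_starEdges_le (P : Clustering G) : P.starEdges.card ≤ P.volume := by
  classical
  refine Finset.card_biUnion_le.trans (Finset.sum_le_sum fun c _ => ?_)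
  exact Finset.card_image_le.trans (Finset.card_le_card (closedBallFinset_mono G c (by lia)))

lemma card_sphereFinset_home_le {v : V} (h : P.home v ∉ P.heavy r) :
    (sphereFinset G (P.home v) (P.radius (P.home v))).card ≤ r := by
  simpa [heavy, P.home_mem v] using h

lemma ThinSpheres.card_crossEdges_le (h : P.ThinSpheres r) : (P.crossEdges r).card ≤ P.volume := by
  classical
  calc (P.crossEdges r).card ≤ ({v ∈ P.boundary | P.home v ∉ P.heavy r} : Finset V).card * r :=
        Finset.card_biUnion_le_card_mul _ _ _ fun v hv =>
          Finset.card_image_le.trans (card_sphereFinset_home_le (Finset.mem_filter.1 hv).2)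
    _ ≤ P.boundary.card * r := Nat.mul_le_mul_right _ (Finset.card_filter_le _ _)
    _ ≤ (∑ c ∈ P.centers, (sphereFinset G c (P.radius c)).card) * r :=
        Nat.mul_le_mul_right _ Finset.card_biUnion_le
    _ ≤ P.volume := by
        rw [Finset.sum_mul]
        exact Finset.sum_le_sum h

lemma ThinSpheres.sq_le_card_closedBallFinset (h : P.ThinSpheres r) {c : V} (hc : c ∈ P.heavy r) :
    r ^ 2 ≤ (closedBallFinset G c (2 * P.radius c)).card := by
  obtain ⟨hcP, hr⟩ := Finset.mem_filter.1 hc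
  rw [sq]
  exact (Nat.mul_le_mul_right r hr.le).trans (h c hcP)

lemma sum_heavy_card_closedBallFinset_le (P : Clustering G) (r : ℕ) :
    ∑ c ∈ P.heavy r, (closedBallFinset G c (2 * P.radius c)).card ≤ P.volume :=
  Finset.sum_le_sum_of_subset (Finset.filter_subset _ _)

lemma ThinSpheres.sum_heavy_ceil_le (h : P.ThinSpheres r) (hr : 0 < r) {C β : ℝ} (hC : 0 ≤ C)
    (hβ0 : 0 ≤ β) (hβ1 : β ≤ 1) :
    ∑ c ∈ P.heavy r, (⌈C * ((closedBallFinset G c (2 * P.radius c)).card : ℝ) ^ β⌉₊ : ℝ) ≤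
      (C + 1) * P.volume * ((r : ℝ) ^ 2) ^ (β - 1) :=
  calc _ ≤ ∑ c ∈ P.heavy r, (C + 1) * ((closedBallFinset G c (2 * P.radius c)).card : ℝ) *
          ((r : ℝ) ^ 2) ^ (β - 1) :=
        Finset.sum_le_sum fun c hc => natCast_ceil_mul_rpow_le hC hβ0 hβ1 (by positivity)
          (by exact_mod_cast h.sq_le_card_closedBallFinset hc)
          (by exact_mod_cast one_le_card_closedBallFinset G c _)
    _ ≤ _ := by
        rw [← Finset.sum_mul, ← Finset.mul_sum]
        gcongr
        exact_mod_cast P.sum_heavy_card_closedBallFinset_le r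

end Clustering

namespace EmulatorBound

variable {C β : ℝ}

lemma exists_supports (h : EmulatorBound C β) (hC : 0 ≤ C) (hβ0 : 0 ≤ β) (hβ1 : β ≤ 1)
    (hG : G.Connected) {P : Clustering G} {r : ℕ} (hr : 0 < r) (hP : P.ThinSpheres r) :
    ∃ (E : Finset (Sym2 V)) (k : V → ℕ), P.Supports E (P.heavy r) k ∧
      (E.card : ℝ) ≤ (C + 2) * P.volume ∧
      ∑ c ∈ P.heavy r, (k c : ℝ) ≤ (C + 1) * P.volume * ((r : ℝ) ^ 2) ^ (β - 1) := by
  classical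
  choose E hcard hE using fun c => h.exists_stretchLE_closedBallFinset hG c (P.radius c)
  refine ⟨_, _, P.supports_union fun c _ => hE c, ?_, hP.sum_heavy_ceil_le hr hC hβ0 hβ1⟩
  have hstar : (P.starEdges.card : ℝ) ≤ P.volume := by exact_mod_cast P.card_starEdges_le
  have hcross : ((P.crossEdges r).card : ℝ) ≤ P.volume := by exact_mod_cast hP.card_crossEdges_le
  have hinner : (((P.heavy r).biUnion E).card : ℝ) ≤ C * P.volume :=
    calc (((P.heavy r).biUnion E).card : ℝ) ≤ ∑ c ∈ P.heavy r, ((E c).card : ℝ) := by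
          exact_mod_cast Finset.card_biUnion_le
      _ ≤ ∑ c ∈ P.heavy r, C * (closedBallFinset G c (2 * P.radius c)).card :=
          Finset.sum_le_sum fun c _ => hcard c
      _ ≤ C * P.volume := by
          rw [← Finset.mul_sum]
          gcongr
          exact_mod_cast P.sum_heavy_card_closedBallFinset_le r
  have hunion : ((P.starEdges ∪ P.crossEdges r ∪ (P.heavy r).biUnion E).card : ℝ) ≤
      P.starEdges.card + (P.crossEdges r).card + ((P.heavy r).biUnion E).card := by
    exact_mod_cast (Finset.card_union_le _ _).trans
      (Nat.add_le_add_right (Finset.card_union_le _ _) _)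
  linarith

lemma exists_stretchLE (h : EmulatorBound C β) (hC : 0 ≤ C) (hβ0 : 0 ≤ β) (hβ1 : β ≤ 1)
    (hG : G.Connected) {η : ℝ} (hη : 0 < η) {r : ℕ} (hr : 0 < r) :
    ∃ E : Finset (Sym2 V),
      (E.card : ℝ) ≤ (C + 2) * ((8 : ℝ) ^ (1 / η) * Fintype.card V) +
        ((C + 1) * ((8 : ℝ) ^ (1 / η) * Fintype.card V) * ((r : ℝ) ^ 2) ^ (β - 1) / r *
          (2 * Real.log (Fintype.card V)) + 1) ^ 2 ∧
      ∀ s t, StretchLE G E (2 * r + 8 * ⌊4 * (r * (Fintype.card V : ℝ) ^ η)⌋₊) s t := by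
  classical
  obtain ⟨P, hradius, hvol, hthin⟩ := exists_clustering hG hη hr
  obtain ⟨E, k, hE, hcard, hk⟩ := h.exists_supports hC hβ0 hβ1 hG hr hthin
  have hR : ∀ c ∈ P.centers, P.radius c ≤ ⌊4 * (r * (Fintype.card V : ℝ) ^ η)⌋₊ :=
    fun c hc => Nat.le_floor (hradius c hc)
  obtain ⟨Z, hZcard, hZ⟩ := hE.exists_hubs hG hR hr
  refine ⟨E ∪ Z.sym2, ?_, hE.stretchLE_of_clique hG hR (by simp) (fun x hx y hy => ?_) hZ⟩
  · have hclique : (Z.sym2.card : ℝ) ≤ (Z.card : ℝ) ^ 2 := by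
      rw [Finset.card_sym2, Nat.choose_two_right]
      exact_mod_cast Nat.div_le_of_le_mul (by simp only [Nat.add_sub_cancel]; nlinarith)
    have hunion : ((E ∪ Z.sym2).card : ℝ) ≤ E.card + Z.sym2.card := by
      exact_mod_cast Finset.card_union_le _ _
    calc ((E ∪ Z.sym2).card : ℝ) ≤ E.card + (Z.card : ℝ) ^ 2 := hunion.trans (by gcongr)
      _ ≤ (C + 2) * P.volume + ((∑ c ∈ P.heavy r, (k c : ℝ)) / r *
          (2 * Real.log (Fintype.card V)) + 1) ^ 2 := by gcongr
      _ ≤ (C + 2) * P.volume + ((C + 1) * P.volume * ((r : ℝ) ^ 2) ^ (β - 1) / r *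
          (2 * Real.log (Fintype.card V)) + 1) ^ 2 := by gcongr
      _ ≤ _ := by gcongr
  · exact Finset.mem_coe.2 (Finset.mem_union_right _ (Finset.mk_mem_sym2_iff.2 ⟨hx, hy⟩))

end EmulatorBound

end Construction

section Recursion

lemma mul_rpow_mul_log_le {n r β δ : ℝ} (hβ : β < 1) (hδ : 0 < δ) (hn : 1 ≤ n)
    (hr : n ^ (1 / (6 - 4 * β) + δ / 2) ≤ r) :
    n * ((r ^ 2) ^ (β - 1) / r) * Real.log n ≤ 2 / δ * √n := by
  have hn0 : 0 < n := by linarith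
  have hr0 : 0 < r := (Real.rpow_pos_of_pos hn0 _).trans_le hr
  have hexp : (1 / (6 - 4 * β) + δ / 2) * (2 * β - 3) ≤ -(1 / 2 + δ / 2) := by
    have hhalf : 1 / (6 - 4 * β) * (2 * β - 3) = -(1 / 2) := by
      rw [show 6 - 4 * β = -2 * (2 * β - 3) by ring]
      have : 2 * β - 3 ≠ 0 := by linarith
      field_simp
    nlinarith
  have hpow : (r ^ 2) ^ (β - 1) / r ≤ n ^ (-(1 / 2 + δ / 2)) :=
    calc (r ^ 2) ^ (β - 1) / r = r ^ (2 * β - 3) := by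
          rw [← Real.rpow_natCast, ← Real.rpow_mul hr0.le, ← Real.rpow_sub_one hr0.ne']
          ring_nf
      _ ≤ (n ^ (1 / (6 - 4 * β) + δ / 2)) ^ (2 * β - 3) :=
          Real.rpow_le_rpow_of_nonpos (by positivity) hr (by linarith)
      _ = n ^ ((1 / (6 - 4 * β) + δ / 2) * (2 * β - 3)) := (Real.rpow_mul hn0.le _ _).symm
      _ ≤ n ^ (-(1 / 2 + δ / 2)) := Real.rpow_le_rpow_of_exponent_le hn hexp
  calc n * ((r ^ 2) ^ (β - 1) / r) * Real.log n
      ≤ n * n ^ (-(1 / 2 + δ / 2)) * (n ^ (δ / 2) / (δ / 2)) := by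
        gcongr
        · exact Real.log_nonneg hn
        · exact Real.log_le_rpow_div hn0.le (by positivity)
    _ = 2 / δ * (n ^ (1 : ℝ) * n ^ (-(1 / 2 + δ / 2)) * n ^ (δ / 2)) := by
        rw [Real.rpow_one]
        field_simp
    _ = 2 / δ * √n := by
        rw [← Real.rpow_add hn0, ← Real.rpow_add hn0, Real.sqrt_eq_rpow]
        ring_nf

lemma two_mul_add_eight_mul_floor_le {n σ η : ℝ} (hn : 1 ≤ n) (hσ : 0 ≤ σ) (hη : 0 ≤ η) :
    ((2 * ⌈n ^ σ⌉₊ + 8 * ⌊4 * (⌈n ^ σ⌉₊ * n ^ η)⌋₊ : ℕ) : ℝ) ≤ 68 * n ^ (σ + η) := by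
  have hσ1 : 1 ≤ n ^ σ := Real.one_le_rpow hn hσ
  have hη1 : 1 ≤ n ^ η := Real.one_le_rpow hn hη
  have hceil : (⌈n ^ σ⌉₊ : ℝ) ≤ 2 * n ^ σ := by
    linarith [Nat.ceil_lt_add_one (zero_le_one.trans hσ1)]
  push_cast
  calc (2 * ⌈n ^ σ⌉₊ + 8 * ⌊4 * (⌈n ^ σ⌉₊ * n ^ η)⌋₊ : ℝ)
      ≤ 2 * (⌈n ^ σ⌉₊ * n ^ η) + 8 * (4 * (⌈n ^ σ⌉₊ * n ^ η)) := by
        gcongr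
        · exact le_mul_of_one_le_right (by positivity) hη1
        · exact Nat.floor_le (by positivity)
    _ = 34 * (⌈n ^ σ⌉₊ * n ^ η) := by ring
    _ ≤ 34 * (2 * n ^ σ * n ^ η) := by gcongr
    _ = 68 * n ^ (σ + η) := by
        rw [Real.rpow_add (by linarith)]
        ring

lemma mul_add_sq_le {A B n x : ℝ} (hn : 1 ≤ n) (hx0 : 0 ≤ x) (hx : x ≤ B * √n) :
    A * n + (x + 1) ^ 2 ≤ (A + (B + 1) ^ 2) * n := by
  have hsqrt : 1 ≤ √n := Real.one_le_sqrt.2 hn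
  calc A * n + (x + 1) ^ 2 ≤ A * n + (B * √n + √n) ^ 2 := by gcongr
    _ = A * n + (B + 1) ^ 2 * √n ^ 2 := by ring
    _ = (A + (B + 1) ^ 2) * n := by
        rw [Real.sq_sqrt (by linarith)]
        ring

lemma ncard_edgeSet_fromEdgeSet_le {V : Type*} (E : Finset (Sym2 V)) :
    (fromEdgeSet (E : Set (Sym2 V))).edgeSet.ncard ≤ E.card := by
  rw [SimpleGraph.edgeSet_fromEdgeSet, ← Set.ncard_coe_finset]
  exact Set.ncard_le_ncard Set.sdiff_subset

theorem EmulatorBound.exists_improved {C β δ : ℝ} (h : EmulatorBound C β) (hC : 0 ≤ C)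
    (hβ0 : 0 ≤ β) (hβ1 : β < 1) (hδ : 0 < δ) :
    ∃ C' : ℝ, 0 < C' ∧ EmulatorBound C' (1 / (6 - 4 * β) + δ) := by
  let D : ℝ := (8 : ℝ) ^ (1 / (δ / 2))
  let M : ℝ := (C + 2) * D + ((C + 1) * D * (4 / δ) + 1) ^ 2
  have hM : 0 ≤ M := by positivity
  refine ⟨M + 68, by positivity, fun n G hG => ?_⟩
  have hn : 1 ≤ (n : ℝ) := by exact_mod_cast Fin.pos_iff_nonempty.2 hG.nonempty
  set σ : ℝ := 1 / (6 - 4 * β) + δ / 2 with hσ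
  have hσ0 : 0 ≤ σ := by
    have : 0 < 6 - 4 * β := by linarith
    positivity
  set r : ℕ := ⌈(n : ℝ) ^ σ⌉₊
  obtain ⟨E, hcard, hE⟩ := h.exists_stretchLE hC hβ0 hβ1.le hG (half_pos hδ) (r := r)
    (by positivity)
  rw [Fintype.card_fin] at hcard hE
  refine ⟨fromEdgeSet E, distWeight G,
    (isAdditiveEmulator_of_stretchLE hG hE).mono ?_, ?_⟩
  · refine Nat.cast_le.1 (((two_mul_add_eight_mul_floor_le hn hσ0 (half_pos hδ).le).trans ?_).trans
      (Nat.le_ceil _))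
    rw [hσ, add_assoc, add_halves]
    gcongr
    linarith
  · have hhubs : (C + 1) * (D * n) * ((r : ℝ) ^ 2) ^ (β - 1) / r * (2 * Real.log n) ≤
        (C + 1) * D * (4 / δ) * √n :=
      calc _ = (C + 1) * D * 2 * (n * (((r : ℝ) ^ 2) ^ (β - 1) / r) * Real.log n) := by ring
        _ ≤ (C + 1) * D * 2 * (2 / δ * √n) := by
            gcongr ?_ * ?_
            exact mul_rpow_mul_log_le hβ1 hδ hn (Nat.le_ceil _)
        _ = _ := by ring
    calc ((fromEdgeSet (E : Set (Sym2 (Fin n)))).edgeSet.ncard : ℝ) ≤ E.card := by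
          exact_mod_cast ncard_edgeSet_fromEdgeSet_le E
      _ ≤ (C + 2) * D * n + _ := by rwa [mul_assoc (C + 2)]
      _ ≤ M * n := mul_add_sq_le hn (by positivity) hhubs
      _ ≤ (M + 68) * n := by
          gcongr
          linarith

lemma one_div_six_sub_four_mul_add_le {α x : ℝ} (hx : 0 ≤ x) (h : α + x < 1) :
    1 / (6 - 4 * (α + x)) ≤ 1 / (6 - 4 * α) + x := by
  have hα : 2 ≤ 6 - 4 * α := by linarith
  have hαx : 2 ≤ 6 - 4 * (α + x) := by linarith
  rw [div_add' _ _ _ (by positivity), div_le_div_iff₀ (by positivity) (by positivity)]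
  nlinarith [mul_le_mul hα hαx zero_le_two (by positivity)]

end Recursion

theorem emulator_recursion (α : ℝ) (hα0 : 0 < α) (hα1 : α < 1)
    (hyp : ∀ ε : ℝ, 0 < ε → ∃ C : ℝ, 0 < C ∧
      ∀ m : ℕ, ∀ G' : SimpleGraph (Fin m), G'.Connected →
        ∃ (H' : SimpleGraph (Fin m)) (w' : Sym2 (Fin m) → ℕ),
          IsAdditiveEmulator G' H' w' ⌈C * (m : ℝ) ^ (α + ε)⌉₊ ∧
          (H'.edgeSet.ncard : ℝ) ≤ C * m) :
    ∀ ε : ℝ, 0 < ε → ∃ C' : ℝ, 0 < C' ∧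
      ∀ n : ℕ, ∀ G : SimpleGraph (Fin n), G.Connected →
        ∃ (H : SimpleGraph (Fin n)) (w : Sym2 (Fin n) → ℕ),
          IsAdditiveEmulator G H w ⌈C' * (n : ℝ) ^ (1 / (6 - 4 * α) + ε)⌉₊ ∧
          (H.edgeSet.ncard : ℝ) ≤ C' * n := by
  intro ε hε
  set x : ℝ := min ((1 - α) / 2) (ε / 2)
  have hx0 : 0 < x := lt_min (by linarith) (by linarith)
  have hαx : α + x < 1 := by linarith [min_le_left ((1 - α) / 2) (ε / 2)]
  have hxε : x ≤ ε / 2 := min_le_right _ _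
  obtain ⟨C, hC, h⟩ := hyp x hx0
  obtain ⟨C', hC', h'⟩ :=
    EmulatorBound.exists_improved h hC.le (by linarith) hαx (half_pos hε)
  refine ⟨C', hC', h'.mono hC'.le ?_⟩
  linarith [one_div_six_sub_four_mul_add_le hx0.le hαx]
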